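/- Let H and H' be complex Hilbert spaces, let (s_n)_{n ≥ 1} and (s'_n)_{n ≥ 1} be families of bounded operators on H and H' respectively with s_m^* s_n = δ_{mn}·1 and s'_m{}^* s'_n = δ_{mn}·1 for all m, n ≥ 1, and let Ω ∈ H and Ω' ∈ H' be unit vectors, cyclic for (s_n) and (s'_n) respectively, with s_1(s_2 Ω) = Ω and s'_1(s'_2 Ω') = Ω'. Then there exists a unitary operator U : H → H' such that U Ω = Ω' and U s_n = s'_n U for every n ≥ 1. (Any two representations in the class P∞(12) are unitarily equivalent.) -/

import Mathlib

/-- The vector `s_w Ω` of a word `w` (letters shifted by one, so that they are at least 1). -/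
def wordVec {H : Type*} [NormedAddCommGroup H] [InnerProductSpace ℂ H]
    (s : ℕ → H →L[ℂ] H) (Ω : H) : List ℕ → H
  | [] => Ω
  | n :: w => s (n + 1) (wordVec s Ω w)

/-- The inner products of `Ω` with the word vectors. -/
noncomputable def vacCoeff : List ℕ → ℂ
  | [] => 1
  | [_] => 0
  | a :: b :: w => if a = 0 ∧ b = 1 then vacCoeff w else 0

/-- The inner products of the word vectors. -/
noncomputable def gramCoeff : List ℕ → List ℕ → ℂ
  | [], v => vacCoeff v
  | a :: u, [] => (starRingEnd ℂ) (vacCoeff (a :: u))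
  | a :: u, b :: v => if a = b then gramCoeff u v else 0

section Words

variable {H : Type*} [NormedAddCommGroup H] [InnerProductSpace ℂ H] [CompleteSpace H]

theorem cuntz_apply (s : ℕ → H →L[ℂ] H)
    (hC : ∀ m n, 1 ≤ m → 1 ≤ n →
      (ContinuousLinearMap.adjoint (s m)).comp (s n) =
        if m = n then (1 : H →L[ℂ] H) else 0) (a b : ℕ) (x : H) :
    ContinuousLinearMap.adjoint (s (a + 1)) (s (b + 1) x) = if a = b then x else 0 := by
  have h := congrArg (fun T : H →L[ℂ] H => T x) (hC (a + 1) (b + 1) (by omega) (by omega))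
  simp only [ContinuousLinearMap.comp_apply, add_left_inj] at h
  rw [h]
  split_ifs <;> simp

theorem cuntz_inner (s : ℕ → H →L[ℂ] H)
    (hC : ∀ m n, 1 ≤ m → 1 ≤ n →
      (ContinuousLinearMap.adjoint (s m)).comp (s n) =
        if m = n then (1 : H →L[ℂ] H) else 0) (a b : ℕ) (x y : H) :
    inner ℂ (s (a + 1) x) (s (b + 1) y) = if a = b then inner ℂ x y else 0 := by
  rw [← ContinuousLinearMap.adjoint_inner_right, cuntz_apply s hC]
  split_ifs <;> simp

theorem inner_vac (s : ℕ → H →L[ℂ] H)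
    (hC : ∀ m n, 1 ≤ m → 1 ≤ n →
      (ContinuousLinearMap.adjoint (s m)).comp (s n) =
        if m = n then (1 : H →L[ℂ] H) else 0) (Ω : H) (hΩ : ‖Ω‖ = 1)
    (hfix : s 1 (s 2 Ω) = Ω) : ∀ v, inner ℂ Ω (wordVec s Ω v) = vacCoeff v
  | [] => by simp [wordVec, vacCoeff, inner_self_eq_norm_sq_to_K, hΩ]
  | [a] => by
    have h1 : inner ℂ (s (1 + 1) Ω) Ω = 0 := by
      conv_lhs => rw [← hfix]
      rw [hfix]
      have := cuntz_inner s hC 1 0 Ω (s 2 Ω)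
      simpa [hfix] using this
    have h2 := cuntz_inner s hC 0 a (s 2 Ω) Ω
    simp only [zero_add, hfix] at h2
    simp only [wordVec, vacCoeff, h2]
    split_ifs
    · exact h1
    · rfl
  | a :: b :: w => by
    have ih := inner_vac s hC Ω hΩ hfix w
    have h2 := cuntz_inner s hC 0 a (s 2 Ω) (s (b + 1) (wordVec s Ω w))
    have h3 := cuntz_inner s hC 1 b Ω (wordVec s Ω w)
    simp only [zero_add, hfix] at h2
    simp only [Nat.reduceAdd] at h3
    simp only [wordVec, vacCoeff, h2, h3, ih]
    split_ifs <;> first | rfl | omega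

theorem inner_words (s : ℕ → H →L[ℂ] H)
    (hC : ∀ m n, 1 ≤ m → 1 ≤ n →
      (ContinuousLinearMap.adjoint (s m)).comp (s n) =
        if m = n then (1 : H →L[ℂ] H) else 0) (Ω : H) (hΩ : ‖Ω‖ = 1)
    (hfix : s 1 (s 2 Ω) = Ω) :
    ∀ u v, inner ℂ (wordVec s Ω u) (wordVec s Ω v) = gramCoeff u v
  | [], v => by
    simpa [gramCoeff, wordVec] using inner_vac s hC Ω hΩ hfix v
  | a :: u, [] => by
    rw [← inner_conj_symm, gramCoeff, ← inner_vac s hC Ω hΩ hfix (a :: u)]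
    rfl
  | a :: u, b :: v => by
    have ih := inner_words s hC Ω hΩ hfix u v
    simp only [wordVec, gramCoeff, cuntz_inner s hC, ih]

theorem words_dense (s : ℕ → H →L[ℂ] H)
    (hC : ∀ m n, 1 ≤ m → 1 ≤ n →
      (ContinuousLinearMap.adjoint (s m)).comp (s n) =
        if m = n then (1 : H →L[ℂ] H) else 0) (Ω : H)
    (hcyc : ∀ K : Submodule ℂ H, IsClosed (K : Set H) → Ω ∈ K →
      (∀ n, 1 ≤ n → ∀ v ∈ K, s n v ∈ K) →
      (∀ n, 1 ≤ n → ∀ v ∈ K, ContinuousLinearMap.adjoint (s n) v ∈ K) → K = ⊤)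
    (hfix : s 1 (s 2 Ω) = Ω) :
    DenseRange (Finsupp.linearCombination ℂ (wordVec s Ω)) := by
  set S := Submodule.span ℂ (Set.range (wordVec s Ω)) with hS
  have key : ∀ T : H →L[ℂ] H, (∀ w, T (wordVec s Ω w) ∈ S) →
      ∀ v ∈ S.topologicalClosure, T v ∈ S.topologicalClosure := by
    intro T hT v hv
    have hle : S ≤ S.comap (T : H →ₗ[ℂ] H) := by
      rw [hS, Submodule.span_le]
      rintro _ ⟨w, rfl⟩
      exact hT w
    exact map_mem_closure T.continuous hv (fun x hx => hle hx)
  have hmem : ∀ w, wordVec s Ω w ∈ S := fun w => Submodule.subset_span ⟨w, rfl⟩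
  have htop : S.topologicalClosure = ⊤ := by
    apply hcyc _ S.isClosed_topologicalClosure (S.le_topologicalClosure (hmem []))
    · intro n hn
      obtain ⟨k, rfl⟩ : ∃ k, n = k + 1 := ⟨n - 1, by omega⟩
      exact key _ fun w => hmem (k :: w)
    · intro n hn
      obtain ⟨k, rfl⟩ : ∃ k, n = k + 1 := ⟨n - 1, by omega⟩
      apply key
      rintro (_ | ⟨a, w⟩)
      · have h := cuntz_apply s hC k 0 (s 2 Ω)
        simp only [zero_add, hfix] at h
        simp only [wordVec, h]
        split_ifs
        · exact hmem [1]
        · exact S.zero_mem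
      · simp only [wordVec, cuntz_apply s hC]
        split_ifs
        · exact hmem w
        · exact S.zero_mem
  rw [DenseRange, ← LinearMap.coe_range, Finsupp.range_linearCombination]
  exact (Submodule.dense_iff_topologicalClosure_eq_top).2 htop

end Words

theorem P_infty_12_unique_up_to_unitary_equivalence
    {H : Type*} [NormedAddCommGroup H] [InnerProductSpace ℂ H] [CompleteSpace H]
    {H' : Type*} [NormedAddCommGroup H'] [InnerProductSpace ℂ H'] [CompleteSpace H']

    (s : ℕ → H →L[ℂ] H) (s' : ℕ → H' →L[ℂ] H')
    (hCuntz : ∀ m n, 1 ≤ m → 1 ≤ n →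
      (ContinuousLinearMap.adjoint (s m)).comp (s n) =
        if m = n then (1 : H →L[ℂ] H) else 0)
    (hCuntz' : ∀ m n, 1 ≤ m → 1 ≤ n →
      (ContinuousLinearMap.adjoint (s' m)).comp (s' n) =
        if m = n then (1 : H' →L[ℂ] H') else 0)
    (Ω : H) (hΩnorm : ‖Ω‖ = 1)
    (Ω' : H') (hΩ'norm : ‖Ω'‖ = 1)
    (hcyc : ∀ K : Submodule ℂ H, IsClosed (K : Set H) → Ω ∈ K →
      (∀ n, 1 ≤ n → ∀ v ∈ K, s n v ∈ K) →
      (∀ n, 1 ≤ n → ∀ v ∈ K, ContinuousLinearMap.adjoint (s n) v ∈ K) → K = ⊤)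
    (hcyc' : ∀ K : Submodule ℂ H', IsClosed (K : Set H') → Ω' ∈ K →
      (∀ n, 1 ≤ n → ∀ v ∈ K, s' n v ∈ K) →
      (∀ n, 1 ≤ n → ∀ v ∈ K, ContinuousLinearMap.adjoint (s' n) v ∈ K) → K = ⊤)
    (hfix : s 1 (s 2 Ω) = Ω) (hfix' : s' 1 (s' 2 Ω') = Ω') :
    ∃ U : H ≃ₗᵢ[ℂ] H', U Ω = Ω' ∧ ∀ n, 1 ≤ n → ∀ v : H, U (s n v) = s' n (U v) := by
  have hnorm : ∀ f : List ℕ →₀ ℂ,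
      ‖Finsupp.linearCombination ℂ (wordVec s' Ω') (LinearEquiv.refl ℂ (List ℕ →₀ ℂ) f)‖ =
      ‖Finsupp.linearCombination ℂ (wordVec s Ω) f‖ := by
    intro f
    rw [@norm_eq_sqrt_re_inner ℂ, @norm_eq_sqrt_re_inner ℂ H]
    congr 2
    simp only [LinearEquiv.refl_apply, Finsupp.linearCombination_apply, Finsupp.sum_inner,
      Finsupp.inner_sum, inner_smul_left, inner_smul_right,
      inner_words s hCuntz Ω hΩnorm hfix, inner_words s' hCuntz' Ω' hΩ'norm hfix']
  have hd := words_dense s hCuntz Ω hcyc hfix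
  have hd' := words_dense s' hCuntz' Ω' hcyc' hfix'
  let U := (LinearEquiv.refl ℂ (List ℕ →₀ ℂ)).extendOfIsometry _ _ hd hd' hnorm
  have hU : ∀ w, U (wordVec s Ω w) = wordVec s' Ω' w := by
    intro w
    have h := LinearEquiv.extendOfIsometry_eq (LinearEquiv.refl ℂ (List ℕ →₀ ℂ)) _ _ hd hd' hnorm
      (Finsupp.single w 1)
    simpa using h
  refine ⟨U, hU [], ?_⟩
  intro n hn
  obtain ⟨k, rfl⟩ : ∃ k, n = k + 1 := ⟨n - 1, by omega⟩
  have hcont : (fun v => U (s (k + 1) v)) = fun v => s' (k + 1) (U v) := by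
    refine hd.equalizer (by fun_prop) (by fun_prop) ?_
    funext f
    simp only [Function.comp_apply]
    induction f using Finsupp.induction_linear with
    | zero => simp
    | add f g hf hg => simp only [map_add, hf, hg]
    | single w c =>
      simp only [Finsupp.linearCombination_single, map_smul, hU]
      congr 1
      exact hU (k :: w)
  exact congrFun hcont
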